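/- Let H be a complex Hilbert space and S : dom(S) ⊆ H → H a densely defined skew-selfadjoint operator such that the embedding dom(S) ↪ H is compact (every sequence (xₙ) in dom(S) with (‖xₙ‖) and (‖S xₙ‖) bounded has a subsequence converging in H). Then S is a Fredholm operator of index zero: ran(S) is closed, ker(S) is finite-dimensional, the cokernel H / ran(S) is finite-dimensional, and dim ker(S) = dim (H / ran(S)) (equivalently dim ker(S) = dim ran(S)^⊥). -/

import Mathlib

/-!
Along a bounded sequence in `dom S` whose images converge, compactness yields a convergent
subsequence, and closedness puts the limit in the graph of `S`. Applied to the unit ball of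
`ker S` this gives finite dimensionality by Riesz; applied to unit vectors of `(ker S)ᗮ` it bounds
`S` below there; applied to preimages in `(ker S)ᗮ` of a convergent sequence of images, which are
bounded by this estimate, it gives closed range. The cokernel is then `(ran S)ᗮ = ker S†`, so the
index vanishes as soon as `S` and `S†` have the same kernel, as they do for `S† = -S`.
-/

noncomputable section

open LinearPMap
open scoped ComplexInnerProductSpace

/-- The range of a partially defined linear operator, as a submodule. -/
def ranSub {E F : Type*} [NormedAddCommGroup E] [NormedAddCommGroup F]
    [InnerProductSpace ℂ E] [InnerProductSpace ℂ F] (S : E →ₗ.[ℂ] F) : Submodule ℂ F :=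
  LinearMap.range S.toFun

/-- The kernel of a partially defined linear operator, as a submodule of the ambient space. -/
def kerSub {E F : Type*} [NormedAddCommGroup E] [NormedAddCommGroup F]
    [InnerProductSpace ℂ E] [InnerProductSpace ℂ F] (S : E →ₗ.[ℂ] F) : Submodule ℂ E :=
  (LinearMap.ker S.toFun).map S.domain.subtype

open Filter Topology

/-- The embedding `dom S ↪ E` is compact for the graph norm of `S`: graph-norm bounded sequences in
the domain have subsequences converging in `E`. Boundedness of `x` and of `S x` is required
separately; together this is boundedness in the graph norm. -/
def HasCompactDomainEmbedding {R E F : Type*} [Ring R] [SeminormedAddCommGroup E] [Module R E]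
    [SeminormedAddCommGroup F] [Module R F] (S : E →ₗ.[R] F) : Prop :=
  ∀ x : ℕ → S.domain, (∃ C, ∀ n, ‖(x n : E)‖ ≤ C) → (∃ C, ∀ n, ‖S (x n)‖ ≤ C) →
    ∃ φ : ℕ → ℕ, StrictMono φ ∧ ∃ l : E, Tendsto (fun n => (x (φ n) : E)) atTop (𝓝 l)

theorem HasCompactDomainEmbedding.exists_subseq_tendsto_mem_graph {R E F : Type*} [CommRing R]
    [SeminormedAddCommGroup E] [Module R E] [SeminormedAddCommGroup F] [Module R F]
    {S : E →ₗ.[R] F} (hcomp : HasCompactDomainEmbedding S) (hS : S.IsClosed)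
    {x : ℕ → S.domain} {C : ℝ} (hx : ∀ n, ‖(x n : E)‖ ≤ C)
    {y : F} (hy : Tendsto (fun n => S (x n)) atTop (𝓝 y)) :
    ∃ (l : E) (φ : ℕ → ℕ), (l, y) ∈ S.graph ∧ StrictMono φ ∧
      Tendsto (fun n => (x (φ n) : E)) atTop (𝓝 l) := by
  have hSx : ∃ M, ∀ n, ‖S (x n)‖ ≤ M := by
    simpa using (Metric.isBounded_range_of_tendsto _ hy).exists_norm_le
  obtain ⟨φ, hφ, l, hl⟩ := hcomp x ⟨C, hx⟩ hSx
  refine ⟨l, φ, ?_, hφ, hl⟩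
  exact hS.mem_of_tendsto (hl.prodMk_nhds (hy.comp hφ.tendsto_atTop))
    (Eventually.of_forall fun n => S.mem_graph (x (φ n)))

theorem neg_isClosed {R E F : Type*} [CommRing R] [AddCommGroup E] [Module R E]
    [TopologicalSpace E] [AddCommGroup F] [Module R F] [TopologicalSpace F] [ContinuousNeg F]
    {S : E →ₗ.[R] F} (hS : S.IsClosed) : (-S).IsClosed := by
  have hgraph : ((-S).graph : Set (E × F)) = (fun p => (p.1, -p.2)) ⁻¹' S.graph := by
    ext ⟨x, y⟩
    simp [neg_eq_iff_eq_neg]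
  rw [LinearPMap.IsClosed, hgraph]
  exact IsClosed.preimage (by fun_prop) hS

theorem isClosed_of_adjoint_eq_neg {𝕜 H : Type*} [RCLike 𝕜] [NormedAddCommGroup H]
    [InnerProductSpace 𝕜 H] [CompleteSpace H] {S : H →ₗ.[𝕜] H}
    (hdense : Dense (S.domain : Set H)) (hskew : S† = -S) : S.IsClosed := by
  simpa [hskew] using neg_isClosed (LinearPMap.adjoint_isClosed hdense)

section Kernel

variable {E F : Type*} [NormedAddCommGroup E] [NormedAddCommGroup F]
  [InnerProductSpace ℂ E] [InnerProductSpace ℂ F] {S : E →ₗ.[ℂ] F}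

theorem mem_kerSub_iff_mem_graph {x : E} : x ∈ kerSub S ↔ (x, 0) ∈ S.graph := by
  simp [kerSub, LinearMap.mem_ker]

theorem kerSub_neg (S : E →ₗ.[ℂ] F) : kerSub (-S) = kerSub S := by
  ext x
  simp [mem_kerSub_iff_mem_graph]

theorem kerSub_adjoint [CompleteSpace E] (hdense : Dense (S.domain : Set E)) :
    kerSub S† = (ranSub S)ᗮ := by
  ext y
  rw [mem_kerSub_iff_mem_graph, LinearPMap.adjoint_graph_eq_graph_adjoint hdense]
  simp only [Submodule.mem_adjoint_iff, Submodule.mem_orthogonal, inner_zero_right, sub_zero]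
  constructor
  · rintro h _ ⟨x, rfl⟩
    exact h x (S x) (S.mem_graph x)
  · exact fun h x z hxz => h z (LinearPMap.mem_range_iff.2 ⟨x, hxz⟩)

theorem exists_mem_kerSub_orthogonal_apply_eq [(kerSub S).HasOrthogonalProjection] {y : F}
    (hy : y ∈ ranSub S) : ∃ x : S.domain, (x : E) ∈ (kerSub S)ᗮ ∧ S x = y := by
  obtain ⟨x, rfl⟩ := hy
  obtain ⟨_, ⟨k, hk, rfl⟩, z, hz, hx⟩ := (kerSub S).exists_add_mem_mem_orthogonal (x : E)
  refine ⟨x - k, ?_, ?_⟩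
  · simpa [hx] using hz
  · rw [LinearPMap.map_sub, show S k = 0 from hk, sub_zero]
    rfl

end Kernel

namespace HasCompactDomainEmbedding

variable {E F : Type*} [NormedAddCommGroup E] [NormedAddCommGroup F]
  [InnerProductSpace ℂ E] [InnerProductSpace ℂ F] {S : E →ₗ.[ℂ] F}

theorem finiteDimensional_kerSub (hcomp : HasCompactDomainEmbedding S) (hS : S.IsClosed) :
    FiniteDimensional ℂ (kerSub S) := by
  refine .of_isCompact_closedBall ℂ one_pos (c := 0) (IsSeqCompact.isCompact fun x hx => ?_)
  simp only [mem_closedBall_zero_iff] at hx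
  choose u hu hux using fun n => (x n).2
  have hu_norm (n) : ‖(u n : E)‖ ≤ 1 := by simpa [← hux] using hx n
  obtain ⟨l, φ, hl, hφ, hlim⟩ :=
    hcomp.exists_subseq_tendsto_mem_graph hS hu_norm (tendsto_const_nhds.congr fun n => (hu n).symm)
  have hlim' : Tendsto (fun n => (x (φ n) : E)) atTop (𝓝 l) := by
    simpa only [← hux, Submodule.subtype_apply] using hlim
  refine ⟨⟨l, mem_kerSub_iff_mem_graph.2 hl⟩, ?_, φ, hφ, tendsto_subtype_rng.2 hlim'⟩
  exact mem_closedBall_zero_iff.2 (le_of_tendsto' hlim'.norm fun n => hx (φ n))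

theorem exists_pos_le_norm_apply_of_norm_eq_one (hcomp : HasCompactDomainEmbedding S)
    (hS : S.IsClosed) {K : Submodule ℂ E} (hK : IsClosed (K : Set E))
    (hdisj : Disjoint K (kerSub S)) :
    ∃ ε > 0, ∀ x : S.domain, (x : E) ∈ K → ‖(x : E)‖ = 1 → ε ≤ ‖S x‖ := by
  by_contra! hsmall
  choose u huK hu_norm hSu using fun n : ℕ => hsmall (1 / (n + 1)) Nat.one_div_pos_of_nat
  have hSu_lim : Tendsto (fun n => S (u n)) atTop (𝓝 0) :=
    squeeze_zero_norm (fun n => (hSu n).le) tendsto_one_div_add_atTop_nhds_zero_nat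
  obtain ⟨l, φ, hl, -, hlim⟩ :=
    hcomp.exists_subseq_tendsto_mem_graph hS (fun n => (hu_norm n).le) hSu_lim
  have hlK : l ∈ K := hK.mem_of_tendsto hlim (Eventually.of_forall fun n => huK (φ n))
  have hl_zero : l = 0 := Submodule.disjoint_def.1 hdisj l hlK (mem_kerSub_iff_mem_graph.2 hl)
  have hl_norm : ‖l‖ = 1 :=
    tendsto_nhds_unique hlim.norm (tendsto_const_nhds.congr fun n => (hu_norm (φ n)).symm)
  simp [hl_zero] at hl_norm

theorem exists_pos_mul_norm_le_norm_apply (hcomp : HasCompactDomainEmbedding S)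
    (hS : S.IsClosed) {K : Submodule ℂ E} (hK : IsClosed (K : Set E))
    (hdisj : Disjoint K (kerSub S)) :
    ∃ ε > 0, ∀ x : S.domain, (x : E) ∈ K → ε * ‖(x : E)‖ ≤ ‖S x‖ := by
  obtain ⟨ε, hε, hunit⟩ := hcomp.exists_pos_le_norm_apply_of_norm_eq_one hS hK hdisj
  refine ⟨ε, hε, fun x hxK => ?_⟩
  rcases eq_or_ne (x : E) 0 with hx | hx
  · simp [hx]
  · have hscaled : ε ≤ ‖S ((‖(x : E)‖⁻¹ : ℂ) • x)‖ :=
      hunit _ (K.smul_mem _ hxK) (norm_smul_inv_norm hx)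
    rwa [LinearPMap.map_smul, norm_smul, norm_inv, Complex.norm_real, norm_norm,
      le_inv_mul_iff₀' (norm_pos_iff.2 hx)] at hscaled

theorem isClosed_ranSub (hcomp : HasCompactDomainEmbedding S) (hS : S.IsClosed) :
    IsClosed (ranSub S : Set F) := by
  have := hcomp.finiteDimensional_kerSub hS
  obtain ⟨ε, hε, hbound⟩ := hcomp.exists_pos_mul_norm_le_norm_apply hS
    (kerSub S).isClosed_orthogonal (kerSub S).orthogonal_disjoint.symm
  refine IsSeqClosed.isClosed fun y w hy hyw => ?_
  choose x hxK hxy using fun n => exists_mem_kerSub_orthogonal_apply_eq (hy n)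
  obtain ⟨M, hM⟩ := (Metric.isBounded_range_of_tendsto y hyw).exists_norm_le
  have hx_norm (n) : ‖(x n : E)‖ ≤ M / ε := by
    rw [le_div_iff₀' hε]
    exact (hbound (x n) (hxK n)).trans (hxy n ▸ hM _ ⟨n, rfl⟩)
  obtain ⟨l, -, hl, -⟩ :=
    hcomp.exists_subseq_tendsto_mem_graph hS hx_norm (hyw.congr fun n => (hxy n).symm)
  exact LinearPMap.mem_range_iff.2 ⟨l, hl⟩

end HasCompactDomainEmbedding

theorem fredholm_index_zero_general {H : Type*} [NormedAddCommGroup H] [InnerProductSpace ℂ H]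
    [CompleteSpace H] (S : H →ₗ.[ℂ] H) (hdense : Dense (S.domain : Set H)) (hS : S.IsClosed)
    (hker : kerSub S† = kerSub S) (hcomp : HasCompactDomainEmbedding S) :
    IsClosed (ranSub S : Set H) ∧
      FiniteDimensional ℂ (kerSub S) ∧
      FiniteDimensional ℂ (H ⧸ ranSub S) ∧
      Module.finrank ℂ (kerSub S) = Module.finrank ℂ (H ⧸ ranSub S) ∧
      Module.finrank ℂ (kerSub S) = Module.finrank ℂ ((ranSub S)ᗮ) := by
  have hclosed := hcomp.isClosed_ranSub hS
  have hfin := hcomp.finiteDimensional_kerSub hS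
  have := hclosed.completeSpace_coe
  have hker_eq : kerSub S = (ranSub S)ᗮ := hker.symm.trans (kerSub_adjoint hdense)
  let e : (H ⧸ ranSub S) ≃ₗ[ℂ] kerSub S :=
    (ranSub S).quotientEquivOrthogonal.toLinearEquiv.trans (.ofEq _ _ hker_eq.symm)
  exact ⟨hclosed, hfin, .equiv e.symm, e.finrank_eq.symm, by rw [hker_eq]⟩

/-- if `S` is a densely defined skew-selfadjoint operator on a complex Hilbert
space `H` with compact embedding `dom S ↪ H`, then `S` is Fredholm of index zero: `ran S` is
closed, `ker S` and the cokernel `H ⧸ ran S` are finite-dimensional, and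
`dim ker S = dim (H ⧸ ran S)` (equivalently `dim ker S = dim (ran S)ᗮ`). -/
theorem fredholm_index_zero {H : Type*} [NormedAddCommGroup H] [InnerProductSpace ℂ H]
    [CompleteSpace H] (S : H →ₗ.[ℂ] H)
    (hdense : Dense (S.domain : Set H)) (hskew : S.adjoint = -S)
    (hcomp : ∀ (x : ℕ → H) (hx : ∀ n, x n ∈ S.domain),
      (∃ C, ∀ n, ‖x n‖ ≤ C) → (∃ C, ∀ n, ‖S ⟨x n, hx n⟩‖ ≤ C) →
      ∃ φ : ℕ → ℕ, StrictMono φ ∧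
        ∃ l : H, Filter.Tendsto (fun n => x (φ n)) Filter.atTop (nhds l)) :
    IsClosed (ranSub S : Set H) ∧
      FiniteDimensional ℂ (kerSub S) ∧
      FiniteDimensional ℂ (H ⧸ ranSub S) ∧
      Module.finrank ℂ (kerSub S) = Module.finrank ℂ (H ⧸ ranSub S) ∧
      Module.finrank ℂ (kerSub S) = Module.finrank ℂ ((ranSub S)ᗮ) := by
  have hker : kerSub S† = kerSub S := by rw [hskew, kerSub_neg]
  exact fredholm_index_zero_general S hdense (isClosed_of_adjoint_eq_neg hdense hskew) hker
    fun x => hcomp _ fun n => (x n).2
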